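/- Let v₁, v₂, v₃, u₁, u₂, u₃ be bit-vectors of width 2. Then the 12-bit zero-extended product of (v₃ ++ v₂ ++ v₁) and (u₃ ++ u₂ ++ u₁) equals ((v₃*u₃) ++ (v₃*u₁) ++ (v₁*u₁)) + (0² ++ (v₂*u₃) ++ (v₂*u₁) ++ 0²) + (0² ++ (v₃*u₂) ++ (v₁*u₂) ++ 0²) + (0⁴ ++ (v₂*u₂) ++ 0⁴) + (0⁴ ++ (v₁*u₃) ++ 0⁴), where each vᵢ*uⱼ denotes the exact 4-bit product of the zero-extensions of vᵢ and uⱼ, and all summands are 12-bit vectors. -/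

import Mathlib

/-- The exact 4-bit partial product of two 2-bit blocks. -/
def pp2 (a b : BitVec 2) : BitVec 4 := ((0#2) ++ a) * ((0#2) ++ b)

/-!
Truncation or zero-extension to width `n` is reduction modulo `2 ^ n`, and the `n`-bit vectors form
a commutative ring. In that ring a concatenation of blocks becomes a polynomial in the radix `2 ^ w`
with the blocks as coefficients, and the partial products, being free of overflow, become products
of blocks. Long multiplication is then the distributive law.
-/

/-- The exact product of two blocks of arbitrary width `w`, with result width `w + w`; at `w = 2` it
unfolds to `pp2`. -/
def blockMul {w : ℕ} (a b : BitVec w) : BitVec (w + w) := (0#w ++ a) * (0#w ++ b)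

theorem natCast_toNat_eq_setWidth {w : ℕ} (n : ℕ) (x : BitVec w) :
    (x.toNat : BitVec n) = x.setWidth n :=
  BitVec.ofNat_toNat n x

theorem toNat_append_eq_mul_add {m w : ℕ} (x : BitVec m) (y : BitVec w) :
    (x ++ y).toNat = x.toNat * 2 ^ w + y.toNat := by
  rw [BitVec.toNat_append, ← Nat.shiftLeft_add_eq_or_of_lt y.isLt, Nat.shiftLeft_eq]

theorem setWidth_append_eq_mul_add {m w : ℕ} (n : ℕ) (x : BitVec m) (y : BitVec w) :
    (x ++ y).setWidth n = x.setWidth n * 2 ^ w + y.setWidth n := by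
  simp only [← natCast_toNat_eq_setWidth, toNat_append_eq_mul_add, Nat.cast_add, Nat.cast_mul,
    Nat.cast_pow, Nat.cast_ofNat]

theorem toNat_blockMul {w : ℕ} (a b : BitVec w) : (blockMul a b).toNat = a.toNat * b.toNat := by
  have no_overflow : a.toNat * b.toNat < 2 ^ (w + w) := by
    rw [← mul_two]
    exact BitVec.toNat_mul_toNat_lt
  simp only [blockMul, BitVec.toNat_mul, toNat_append_eq_mul_add, BitVec.toNat_zero, zero_mul,
    zero_add, Nat.mod_eq_of_lt no_overflow]

theorem setWidth_blockMul {w : ℕ} (n : ℕ) (a b : BitVec w) :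
    (blockMul a b).setWidth n = a.setWidth n * b.setWidth n := by
  simp only [← natCast_toNat_eq_setWidth, toNat_blockMul, Nat.cast_mul]

theorem long_mult_example1_general {w : ℕ} (n : ℕ) (v₁ v₂ v₃ u₁ u₂ u₃ : BitVec w) :
    (v₃ ++ v₂ ++ v₁).setWidth n * (u₃ ++ u₂ ++ u₁).setWidth n =
      (blockMul v₃ u₃ ++ blockMul v₃ u₁ ++ blockMul v₁ u₁).setWidth n
      + (0#w ++ blockMul v₂ u₃ ++ blockMul v₂ u₁ ++ 0#w).setWidth n
      + (0#w ++ blockMul v₃ u₂ ++ blockMul v₁ u₂ ++ 0#w).setWidth n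
      + (0#(w + w) ++ blockMul v₂ u₂ ++ 0#(w + w)).setWidth n
      + (0#(w + w) ++ blockMul v₁ u₃ ++ 0#(w + w)).setWidth n := by
  simp only [setWidth_append_eq_mul_add, setWidth_blockMul, BitVec.setWidth_zero,
    BitVec.zero_mul, BitVec.zero_add, BitVec.add_zero]
  ring

/-- Example 1 of the paper: a concrete combination of concatenations and
additions realizing long multiplication of 6-bit operands in 2-bit blocks. -/
theorem long_mult_example1 (v₁ v₂ v₃ u₁ u₂ u₃ : BitVec 2) :
    BitVec.zeroExtend 12 (v₃ ++ v₂ ++ v₁) * BitVec.zeroExtend 12 (u₃ ++ u₂ ++ u₁) =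
      BitVec.zeroExtend 12 (pp2 v₃ u₃ ++ pp2 v₃ u₁ ++ pp2 v₁ u₁)
      + BitVec.zeroExtend 12 ((0#2) ++ pp2 v₂ u₃ ++ pp2 v₂ u₁ ++ (0#2))
      + BitVec.zeroExtend 12 ((0#2) ++ pp2 v₃ u₂ ++ pp2 v₁ u₂ ++ (0#2))
      + BitVec.zeroExtend 12 ((0#4) ++ pp2 v₂ u₂ ++ (0#4))
      + BitVec.zeroExtend 12 ((0#4) ++ pp2 v₁ u₃ ++ (0#4)) :=
  long_mult_example1_general 12 v₁ v₂ v₃ u₁ u₂ u₃
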